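/- arXiv:1903.06826 — 3 statements merged into one kernel-verified Lean document; each statement's English description precedes it below -/
import Mathlib

section
/- Let D ⊆ ℝ, let w_n : D → ℝ (n ∈ ℕ) be a sequence of functions, let φ : D × ℕ → ℝ, ϕ : D → ℝ, θ ∈ ℝ, and let (μ_n) be a sequence of reals. Suppose that for every z ∈ D there is a sequence ε_n(z) → 0 such that w_n(z) = (1 + ε_n(z)) · φ(z,n) · cos(2π(μ_n · ϕ(z) − θ)) for all n. Let x, y ∈ D be distinct points with ϕ(x) ≠ ϕ(y), ϕ(x) ≠ −ϕ(y), and φ(x,n) · φ(y,n) > 0 for all n, and suppose q · ϕ(x) = p · ϕ(y) for some nonzero coprime integers p, q. Assume that for every nonzero integer r, both sequences (μ_n ϕ(x)/r)_{n} and (μ_n ϕ(y)/r)_{n} are equidistributed modulo 1. Then there exists a real number L with 1/3 ≤ L ≤ 2/3 such that (1/N) · #{0 ≤ n < N : sgn(w_n(x)) = sgn(w_n(y))} → L as N → ∞. -/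
open Filter Real MeasureTheory
open scoped Classical

noncomputable def sgn (t : ℝ) : ℝ := if 0 < t then 1 else if t < 0 then -1 else 0

def EquidistributedMod1 (a : ℕ → ℝ) : Prop :=
  ∀ c d : ℝ, 0 ≤ c → c ≤ d → d ≤ 1 →
    Tendsto (fun N : ℕ =>
      (((Finset.range N).filter (fun n => Int.fract (a n) ∈ Set.Icc c d)).card : ℝ) / N)
      atTop (nhds (d - c))

/-!
Since `q ϕ(x) = p ϕ(y)`, the phases of both cosines are integer multiples `p tₙ`, `q tₙ` of the
single equidistributed sequence `tₙ = μₙ ϕ(x) / p`. Hence the frequency of sign agreement is the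
measure of a subset of the circle with finite boundary, and equals `(1 + c) / 2`, where `c` is the
correlation of the square waves of frequencies `p` and `q`.

Let `m = |p|`. By Bézout, some multiple of `1 / m` rotates the `q`-wave by `1 / m` and fixes the
`p`-wave, so in `c` the `q`-wave may be replaced by its average over `m` equally spaced phases.
By Hermite's identity `∑ j < m, ⌊v + j / m⌋ = ⌊m v⌋` this average is `0` if `m` is even and
`± 1 / m` if `m` is odd. Thus `|c| ≤ 1 / 3` as soon as `m ≥ 2`; by symmetry `|q| ≥ 2` also suffices,
and one of the two holds because `ϕ(x) ≠ ± ϕ(y)`.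
-/

open Asymptotics Function
open scoped Topology

/-- The set of indices satisfying `P` has natural density `L`. -/
def HasNatDensity (P : ℕ → Prop) (L : ℝ) : Prop :=
  Tendsto (fun N : ℕ => (((Finset.range N).filter P).card : ℝ) / N) atTop (𝓝 L)

lemma hasNatDensity_iff {P : ℕ → Prop} [DecidablePred P] {L : ℝ} :
    HasNatDensity P L ↔
      Tendsto (fun N : ℕ => (((Finset.range N).filter P).card : ℝ) / N) atTop (𝓝 L) := by
  unfold HasNatDensity
  congr!

lemma HasNatDensity.congr' {P Q : ℕ → Prop} {L : ℝ} (hP : HasNatDensity P L)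
    (h : ∀ᶠ n in atTop, P n ↔ Q n) : HasNatDensity Q L := by
  have hdiff : Tendsto (fun n => (if Q n then (1 : ℝ) else 0) - if P n then 1 else 0)
      atTop (𝓝 0) :=
    tendsto_const_nhds.congr' (h.mono fun n hn => by simp [hn])
  have hsum := Tendsto.add hP hdiff.cesaro
  rw [add_zero] at hsum
  refine hsum.congr fun N => ?_
  rw [Finset.sum_sub_distrib, Finset.sum_boole, Finset.sum_boole]
  ring

section Equidistribution

/-- The empirical measure of the first `N + 1` terms of a sequence; the shift by one makes it a
probability measure for every `N`. -/
noncomputable def empiricalMeasure {Ω : Type*} [MeasurableSpace Ω] (f : ℕ → Ω) (N : ℕ) :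
    ProbabilityMeasure Ω :=
  ⟨((N + 1 : ℕ) : ENNReal)⁻¹ • ∑ n ∈ Finset.range (N + 1), Measure.dirac (f n), ⟨by
    simpa [Measure.finsetSum_apply] using
      ENNReal.inv_mul_cancel (by simp : (N + 1 : ENNReal) ≠ 0) (by finiteness)⟩⟩

lemma empiricalMeasure_apply {Ω : Type*} [MeasurableSpace Ω] [MeasurableSingletonClass Ω]
    (f : ℕ → Ω) (N : ℕ) (E : Set Ω) :
    (empiricalMeasure f N E : ℝ) =
      (((Finset.range (N + 1)).filter fun n => f n ∈ E).card : ℝ) / (N + 1 : ℕ) := by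
  change (((N + 1 : ℕ) : ENNReal)⁻¹ • ∑ n ∈ Finset.range (N + 1), Measure.dirac (f n)).real E = _
  simp [measureReal_def, Measure.finsetSum_apply, Set.indicator_apply, div_eq_inv_mul,
    -Nat.cast_add]

lemma tendsto_empiricalMeasure_apply_iff {Ω : Type*} [MeasurableSpace Ω]
    [MeasurableSingletonClass Ω] {f : ℕ → Ω} {E : Set Ω} {L : NNReal} :
    Tendsto (fun N => empiricalMeasure f N E) atTop (𝓝 L) ↔
      HasNatDensity (fun n => f n ∈ E) L := by
  simp_rw [← NNReal.tendsto_coe, empiricalMeasure_apply]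
  exact tendsto_add_atTop_iff_nat (f := fun N : ℕ =>
    (((Finset.range N).filter fun n => f n ∈ E).card : ℝ) / N) 1

/-- Lebesgue measure on `[0, 1]`, as a probability measure on `ℝ`. -/
noncomputable def unitIntervalMeasure : ProbabilityMeasure ℝ :=
  ⟨volume.restrict (Set.Icc 0 1), ⟨by simp⟩⟩

lemma unitIntervalMeasure_apply (E : Set ℝ) :
    (unitIntervalMeasure E : ℝ) = volume.real (E ∩ Set.Icc 0 1) :=
  congrArg ENNReal.toReal (Measure.restrict_apply' measurableSet_Icc)

variable {a : ℕ → ℝ}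

lemma EquidistributedMod1.hasNatDensity_fract_mem_Icc (ha : EquidistributedMod1 a) (c d : ℝ) :
    HasNatDensity (fun n => Int.fract (a n) ∈ Set.Icc c d)
      (volume.real (Set.Icc c d ∩ Set.Icc 0 1)) := by
  have hclamp : ∀ n, Int.fract (a n) ∈ Set.Icc c d ↔
      Int.fract (a n) ∈ Set.Icc (max c 0) (min d 1) := fun n => by
    simp [Int.fract_nonneg, (Int.fract_lt_one _).le]
  refine HasNatDensity.congr' ?_ (Eventually.of_forall fun n => (hclamp n).symm)
  rw [Set.Icc_inter_Icc, Real.volume_real_Icc]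
  rcases le_or_gt (max c 0) (min d 1) with h | h
  · rw [max_eq_left (sub_nonneg.2 h)]
    exact hasNatDensity_iff.2 (ha _ _ (le_max_right _ _) h (min_le_right _ _))
  · simp [HasNatDensity, Set.Icc_eq_empty h.not_ge, max_eq_right (sub_nonpos.2 h.le)]

lemma EquidistributedMod1.tendsto_empiricalMeasure (ha : EquidistributedMod1 a) :
    Tendsto (empiricalMeasure fun n => Int.fract (a n)) atTop (𝓝 unitIntervalMeasure) := by
  refine IsPiSystem.tendsto_probabilityMeasure_of_tendsto_of_mem
    (S := {s | ∃ c d : ℝ, s = Set.Icc c d}) ?_ ?_ ?_ ?_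
  · rintro _ ⟨c, d, rfl⟩ _ ⟨c', d', rfl⟩ -
    exact ⟨_, _, Set.Icc_inter_Icc⟩
  · rintro _ ⟨c, d, rfl⟩
    exact measurableSet_Icc
  · intro u hu x hx
    obtain ⟨ε, hε, h⟩ := Metric.nhds_basis_closedBall.mem_iff.1 (hu.mem_nhds hx)
    rw [Real.closedBall_eq_Icc] at h
    exact ⟨_, ⟨_, _, rfl⟩, Icc_mem_nhds (by linarith) (by linarith), h⟩
  · rintro _ ⟨c, d, rfl⟩
    rw [tendsto_empiricalMeasure_apply_iff, unitIntervalMeasure_apply]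
    exact ha.hasNatDensity_fract_mem_Icc c d

lemma EquidistributedMod1.hasNatDensity_fract_mem (ha : EquidistributedMod1 a) {E : Set ℝ}
    (hE : volume (frontier E) = 0) :
    HasNatDensity (fun n => Int.fract (a n) ∈ E) (volume.real (E ∩ Set.Icc 0 1)) := by
  have hE' : unitIntervalMeasure (frontier E) = 0 := by
    rw [ProbabilityMeasure.null_iff_toMeasure_null]
    exact Measure.restrict_le_self.absolutelyContinuous hE
  rw [← unitIntervalMeasure_apply, ← tendsto_empiricalMeasure_apply_iff]
  exact ProbabilityMeasure.tendsto_measure_of_null_frontier_of_tendsto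
    ha.tendsto_empiricalMeasure hE'

end Equidistribution

section SquareWave

/-- The square wave of period `1`, equal to `1` on `[0, 1/2)` and to `-1` on `[1/2, 1)`. -/
noncomputable def squareWave (u : ℝ) : ℝ := if Int.fract u < 1 / 2 then 1 else -1

lemma squareWave_eq_one_or_neg_one (u : ℝ) : squareWave u = 1 ∨ squareWave u = -1 :=
  ite_eq_or_eq _ _ _

lemma abs_squareWave (u : ℝ) : |squareWave u| = 1 := by
  rcases squareWave_eq_one_or_neg_one u with h | h <;> simp [h]

lemma squareWave_add_intCast (u : ℝ) (k : ℤ) : squareWave (u + k) = squareWave u := by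
  simp [squareWave]

@[fun_prop]
lemma measurable_squareWave : Measurable squareWave :=
  Measurable.ite (measurableSet_lt measurable_fract measurable_const)
    measurable_const measurable_const

lemma squareWave_eq_floor (u : ℝ) :
    squareWave u = ((1 + 2 * ⌊u⌋ - 2 * ⌊u + 1 / 2⌋ : ℤ) : ℝ) := by
  have h0 := Int.fract_nonneg u
  have h1 := Int.fract_lt_one u
  have hu := Int.floor_add_fract u
  unfold squareWave
  split_ifs with h
  · have : ⌊u + 1 / 2⌋ = ⌊u⌋ := Int.floor_eq_iff.2 ⟨by linarith, by linarith⟩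
    rw [this]
    push_cast
    ring
  · have : ⌊u + 1 / 2⌋ = ⌊u⌋ + 1 :=
      Int.floor_eq_iff.2 ⟨by push_cast; linarith, by push_cast; linarith⟩
    rw [this]
    push_cast
    ring

lemma sum_range_intCast_add_ediv {m : ℕ} (hm : m ≠ 0) (k : ℤ) :
    ∑ j ∈ Finset.range m, (k + j) / (m : ℤ) = k := by
  have hstep : ∀ k : ℤ, ∑ j ∈ Finset.range m, (k + 1 + j) / (m : ℤ) =
      ∑ j ∈ Finset.range m, (k + j) / (m : ℤ) + 1 := fun k => by
    have htel := Finset.sum_range_sub (fun j : ℕ => (k + j) / (m : ℤ)) m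
    rw [Int.add_ediv_of_dvd_right dvd_rfl, Int.ediv_self (by exact_mod_cast hm),
      Finset.sum_sub_distrib] at htel
    simp only [Nat.cast_add, Nat.cast_one, Nat.cast_zero, add_zero] at htel
    simp_rw [add_assoc, add_comm (1 : ℤ)]
    linarith
  induction k using Int.induction_on with
  | zero =>
    exact Finset.sum_eq_zero fun j hj => by
      rw [zero_add]
      exact Int.ediv_eq_zero_of_lt (by positivity) (by exact_mod_cast Finset.mem_range.1 hj)
  | succ k ih => rw [hstep, ih]
  | pred k ih =>
    have := hstep (-k - 1)
    rw [sub_add_cancel, ih] at this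
    linarith

lemma sum_range_floor_add_div {K : Type*} [Field K] [LinearOrder K] [IsStrictOrderedRing K]
    [FloorRing K] (m : ℕ) (v : K) :
    ∑ j ∈ Finset.range m, ⌊v + j / m⌋ = ⌊m * v⌋ := by
  rcases eq_or_ne m 0 with rfl | hm
  · simp
  have hm' : (m : K) ≠ 0 := by exact_mod_cast hm
  calc ∑ j ∈ Finset.range m, ⌊v + j / m⌋
      = ∑ j ∈ Finset.range m, (⌊m * v⌋ + j) / (m : ℤ) := Finset.sum_congr rfl fun j _ => by
        rw [← Int.floor_add_natCast, ← Int.floor_div_natCast, add_div, mul_div_cancel_left₀ _ hm']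
    _ = ⌊m * v⌋ := sum_range_intCast_add_ediv hm _

lemma sum_range_squareWave_add_div (m : ℕ) (v : ℝ) :
    ∑ j ∈ Finset.range m, squareWave (v + j / m) = if Odd m then squareWave (m * v) else 0 := by
  have hsum : ∑ j ∈ Finset.range m, squareWave (v + j / m) =
      ((m + 2 * ⌊m * v⌋ - 2 * ⌊m * v + m / 2⌋ : ℤ) : ℝ) := by
    simp_rw [squareWave_eq_floor, add_right_comm v _ (1 / 2 : ℝ)]
    rw [← Int.cast_sum, Finset.sum_sub_distrib, Finset.sum_add_distrib, ← Finset.mul_sum,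
      ← Finset.mul_sum, sum_range_floor_add_div, sum_range_floor_add_div, mul_add, mul_one_div]
    simp
  rw [hsum]
  split_ifs with hodd
  · obtain ⟨k, rfl⟩ := hodd
    rw [squareWave_eq_floor, show ((2 * k + 1 : ℕ) : ℝ) * v + ((2 * k + 1 : ℕ) : ℝ) / 2 =
      ((2 * k + 1 : ℕ) : ℝ) * v + 1 / 2 + k by push_cast; ring, Int.floor_add_natCast]
    push_cast
    ring
  · obtain ⟨k, rfl⟩ := Nat.not_odd_iff_even.1 hodd
    rw [show ((k + k : ℕ) : ℝ) / 2 = k by push_cast; ring, Int.floor_add_natCast]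
    push_cast
    ring

lemma abs_sum_range_squareWave_add_div_le {m : ℕ} (hm : 2 ≤ m) (v : ℝ) :
    |∑ j ∈ Finset.range m, squareWave (v + j / m)| ≤ m / 3 := by
  rw [sum_range_squareWave_add_div]
  split_ifs with hodd
  · have : 3 ≤ m := by
      obtain ⟨k, rfl⟩ := hodd
      lia
    rw [abs_squareWave, le_div_iff₀ three_pos, one_mul]
    exact_mod_cast this
  · rw [abs_zero]
    positivity

lemma sign_sin_two_pi_mul {u : ℝ} (h : Real.sin (2 * π * u) ≠ 0) :
    (SignType.sign (Real.sin (2 * π * u)) : ℝ) = squareWave u := by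
  have hsin : Real.sin (2 * π * u) = Real.sin (2 * π * Int.fract u) := by
    rw [← Real.sin_sub_int_mul_two_pi (2 * π * u) ⌊u⌋, Int.fract]
    ring_nf
  have h0 := Int.fract_nonneg u
  have h1 := Int.fract_lt_one u
  rw [hsin] at h ⊢
  unfold squareWave
  split_ifs with hu
  · have : 0 < Real.sin (2 * π * Int.fract u) :=
      (Real.sin_nonneg_of_nonneg_of_le_pi (by positivity) (by nlinarith [pi_pos])).lt_of_ne' h
    simp [sign_pos this]
  · have : Real.sin (2 * π * Int.fract u) < 0 := by
      refine lt_of_le_of_ne ?_ h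
      rw [← Real.sin_sub_two_pi]
      exact Real.sin_nonpos_of_nonpos_of_neg_pi_le (by nlinarith [pi_pos]) (by nlinarith [pi_pos])
    simp [sign_neg this]

lemma sign_cos_two_pi_mul {u : ℝ} (h : Real.cos (2 * π * u) ≠ 0) :
    (SignType.sign (Real.cos (2 * π * u)) : ℝ) = squareWave (u + 1 / 4) := by
  have hcos : Real.cos (2 * π * u) = Real.sin (2 * π * (u + 1 / 4)) := by
    rw [← Real.sin_add_pi_div_two]
    ring_nf
  rw [hcos] at h ⊢
  exact sign_sin_two_pi_mul h

end SquareWave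

section Correlation

lemma integral_sum_comp_add {E : Type*} [NormedAddCommGroup E] [NormedSpace ℝ E] {f : ℝ → E}
    {T : ℝ} (hf : Periodic f T) (hT : T ≠ 0) (hint : IntervalIntegrable f volume 0 T)
    {ι : Type*} (s : Finset ι) (c : ι → ℝ) :
    ∫ t in 0..T, ∑ i ∈ s, f (t + c i) = s.card • ∫ t in 0..T, f t := by
  have hshift (i : ι) : ∫ t in 0..T, f (t + c i) = ∫ t in 0..T, f t := by
    rw [intervalIntegral.integral_comp_add_right, zero_add, add_comm,
      hf.intervalIntegral_add_eq (c i) 0, zero_add]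
  rw [intervalIntegral.integral_finsetSum fun i _ => by
    simpa using (hf.intervalIntegrable₀ hT hint (0 + c i) (T + c i)).comp_add_right (c i)]
  simp only [hshift, Finset.sum_const]

/-- The correlation over a period of the square waves of integer frequencies `p` and `q` with
phases `α` and `β`. -/
noncomputable def squareWaveCorrelation (p q : ℤ) (α β : ℝ) : ℝ :=
  ∫ t in (0 : ℝ)..1, squareWave (p * t + α) * squareWave (q * t + β)

lemma squareWaveCorrelation_comm (p q : ℤ) (α β : ℝ) :
    squareWaveCorrelation p q α β = squareWaveCorrelation q p β α := by
  simp only [squareWaveCorrelation, mul_comm]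

lemma intervalIntegrable_squareWave_mul_squareWave (p q α β a b : ℝ) :
    IntervalIntegrable (fun t => squareWave (p * t + α) * squareWave (q * t + β)) volume a b :=
  (intervalIntegrable_const (c := (1 : ℝ))).mono_fun (by fun_prop)
    (Eventually.of_forall fun t => by simp [abs_squareWave])

lemma natAbs_mul_squareWaveCorrelation {p q : ℤ} (hp : p ≠ 0) (hcop : IsCoprime p q) (α β : ℝ) :
    p.natAbs * squareWaveCorrelation p q α β = ∫ t in (0 : ℝ)..1, squareWave (p * t + α) *
      ∑ j ∈ Finset.range p.natAbs, squareWave (q * t + β + j / p.natAbs) := by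
  obtain ⟨a, b, hab⟩ := hcop
  have hm : (p.natAbs : ℝ) ≠ 0 := by simpa using hp
  have hsign : (p : ℝ) = p.sign * p.natAbs := by
    rw [← Int.cast_natCast p.natAbs, ← Int.cast_mul, Int.sign_mul_natAbs]
  have hbez : (q : ℝ) * b = 1 - a * p.sign * p.natAbs := by
    rw [mul_assoc, ← hsign, eq_sub_iff_add_eq]
    exact_mod_cast by linarith
  have hp_shift (t : ℝ) (j : ℕ) :
      squareWave (p * (t + j * b / p.natAbs) + α) = squareWave (p * t + α) := by
    rw [← squareWave_add_intCast (p * t + α) (p.sign * j * b)]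
    congr 1
    rw [hsign]
    push_cast
    field_simp
    ring
  have hq_shift (t : ℝ) (j : ℕ) : squareWave (q * (t + j * b / p.natAbs) + β) =
      squareWave (q * t + β + j / p.natAbs) := by
    rw [← squareWave_add_intCast _ (a * p.sign * j)]
    congr 1
    push_cast
    field_simp
    linear_combination (j : ℝ) * hbez
  have hper : Periodic (fun t : ℝ => squareWave (p * t + α) * squareWave (q * t + β)) 1 :=
    fun t => by
      simp only [mul_add, mul_one, add_right_comm _ _ α, add_right_comm _ _ β,
        squareWave_add_intCast]
  have hsum := integral_sum_comp_add hper one_ne_zero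
    (intervalIntegrable_squareWave_mul_squareWave p q α β 0 1)
    (Finset.range p.natAbs) fun j => j * b / p.natAbs
  simp_rw [hp_shift, hq_shift, ← Finset.mul_sum, Finset.card_range, nsmul_eq_mul] at hsum
  exact hsum.symm

lemma abs_squareWaveCorrelation_le_of_two_le_natAbs {p q : ℤ} (hp : 2 ≤ p.natAbs)
    (hcop : IsCoprime p q) (α β : ℝ) : |squareWaveCorrelation p q α β| ≤ 1 / 3 := by
  have hm : (0 : ℝ) < p.natAbs := by exact_mod_cast two_pos.trans_le hp
  have hle : |p.natAbs * squareWaveCorrelation p q α β| ≤ p.natAbs / 3 := by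
    rw [natAbs_mul_squareWaveCorrelation (by lia) hcop]
    have hbound (t : ℝ) : ‖squareWave (p * t + α) * ∑ j ∈ Finset.range p.natAbs,
        squareWave (q * t + β + j / p.natAbs)‖ ≤ p.natAbs / 3 := by
      rw [Real.norm_eq_abs, abs_mul, abs_squareWave, one_mul]
      exact abs_sum_range_squareWave_add_div_le hp _
    simpa using intervalIntegral.norm_integral_le_of_norm_le_const (a := 0) (b := 1)
      fun t _ => hbound t
  rw [abs_mul, abs_of_pos hm] at hle
  exact le_of_mul_le_mul_left (by linarith) hm

lemma abs_squareWaveCorrelation_le {p q : ℤ} (hp : p ≠ 0) (hq : q ≠ 0) (hcop : IsCoprime p q)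
    (hne : p.natAbs ≠ q.natAbs) (α β : ℝ) : |squareWaveCorrelation p q α β| ≤ 1 / 3 := by
  rcases (by lia : 2 ≤ p.natAbs ∨ 2 ≤ q.natAbs) with h | h
  · exact abs_squareWaveCorrelation_le_of_two_le_natAbs h hcop α β
  · rw [squareWaveCorrelation_comm]
    exact abs_squareWaveCorrelation_le_of_two_le_natAbs h hcop.symm β α

lemma volume_real_squareWave_eq_squareWave (p q : ℤ) (α β : ℝ) :
    volume.real ({t : ℝ | squareWave (p * t + α) = squareWave (q * t + β)} ∩ Set.Icc 0 1) =
      (1 + squareWaveCorrelation p q α β) / 2 := by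
  set E := {t : ℝ | squareWave (p * t + α) = squareWave (q * t + β)}
  have hE : MeasurableSet E := measurableSet_eq_fun (by fun_prop) (by fun_prop)
  have hind : E.indicator 1 =
      fun t : ℝ => (1 + squareWave (p * t + α) * squareWave (q * t + β)) / 2 := by
    funext t
    rcases squareWave_eq_one_or_neg_one (p * t + α) with h | h <;>
      rcases squareWave_eq_one_or_neg_one (q * t + β) with h' | h' <;>
      norm_num [E, Set.indicator_apply, h, h']
  calc volume.real (E ∩ Set.Icc 0 1)
      = ∫ t in (0 : ℝ)..1, E.indicator 1 t := by
        rw [intervalIntegral.integral_of_le zero_le_one, ← integral_Icc_eq_integral_Ioc,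
          integral_indicator_one hE, measureReal_restrict_apply hE]
    _ = (1 + squareWaveCorrelation p q α β) / 2 := by
        rw [hind, intervalIntegral.integral_div, intervalIntegral.integral_add
          intervalIntegrable_const (intervalIntegrable_squareWave_mul_squareWave p q α β 0 1)]
        simp [squareWaveCorrelation]

end Correlation

section SignAgreement

lemma cos_two_pi_mul_fract (p : ℤ) (α t : ℝ) :
    Real.cos (2 * π * (p * Int.fract t - α)) = Real.cos (2 * π * (p * t - α)) := by
  rw [← Real.cos_sub_int_mul_two_pi (2 * π * (p * t - α)) (p * ⌊t⌋), Int.fract]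
  push_cast
  ring_nf

lemma countable_setOf_cos_eq_zero {r : ℝ} (hr : r ≠ 0) (α : ℝ) :
    {t : ℝ | Real.cos (2 * π * (r * t - α)) = 0}.Countable := by
  have hzeros : {u : ℝ | Real.cos u = 0}.Countable := by
    refine (Set.countable_range fun k : ℤ => (2 * k + 1) * π / 2).mono fun u hu => ?_
    obtain ⟨k, hk⟩ := Real.cos_eq_zero_iff.1 hu
    exact ⟨k, hk.symm⟩
  refine hzeros.preimage fun s t hst => ?_
  simpa [pi_ne_zero, hr] using hst

lemma frontier_setOf_sign_eq_sign_subset {X α : Type*} [TopologicalSpace X] [Zero α]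
    [LinearOrder α] [TopologicalSpace α] [OrderTopology α] {f g : X → α}
    (hf : Continuous f) (hg : Continuous g) :
    frontier {x | SignType.sign (f x) = SignType.sign (g x)} ⊆ {x | f x = 0 ∨ g x = 0} := by
  intro x hx
  by_contra h
  obtain ⟨hf0, hg0⟩ := not_or.1 h
  have hlocal {k : X → α} (hk : Continuous k) (hkx : k x ≠ 0) :
      ∀ᶠ y in 𝓝 x, SignType.sign (k y) = SignType.sign (k x) := by
    simpa [ContinuousAt] using (continuousAt_sign_of_ne_zero hkx).comp hk.continuousAt
  have hfg := (hlocal hf hf0).and (hlocal hg hg0)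
  rw [frontier_eq_closure_inter_closure, Set.mem_inter_iff, mem_closure_iff_frequently,
    mem_closure_iff_frequently] at hx
  obtain ⟨y, hy, hfy, hgy⟩ := (hx.1.and_eventually hfg).exists
  obtain ⟨z, hz, hfz, hgz⟩ := (hx.2.and_eventually hfg).exists
  refine hz ?_
  calc SignType.sign (f z) = SignType.sign (f y) := hfz.trans hfy.symm
    _ = SignType.sign (g y) := hy
    _ = SignType.sign (g z) := hgy.trans hgz.symm

lemma signType_cast_inj {R : Type*} [Ring R] [CharZero R] {s t : SignType} :
    (s : R) = t ↔ s = t := by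
  cases s <;> cases t <;> norm_num
  all_goals nofun

lemma sign_cos_eq_sign_cos_iff {p q α β t : ℝ} (hp : Real.cos (2 * π * (p * t - α)) ≠ 0)
    (hq : Real.cos (2 * π * (q * t - β)) ≠ 0) :
    SignType.sign (Real.cos (2 * π * (p * t - α))) =
        SignType.sign (Real.cos (2 * π * (q * t - β))) ↔
      squareWave (p * t + (1 / 4 - α)) = squareWave (q * t + (1 / 4 - β)) := by
  rw [← signType_cast_inj (R := ℝ), sign_cos_two_pi_mul hp, sign_cos_two_pi_mul hq,
    sub_add_eq_add_sub, sub_add_eq_add_sub, add_sub_assoc, add_sub_assoc]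

lemma EquidistributedMod1.hasNatDensity_sign_cos_eq {a : ℕ → ℝ} (ha : EquidistributedMod1 a)
    {p q : ℤ} (hp : p ≠ 0) (hq : q ≠ 0) (α β : ℝ) :
    HasNatDensity (fun n => SignType.sign (Real.cos (2 * π * (p * a n - α))) =
        SignType.sign (Real.cos (2 * π * (q * a n - β))))
      ((1 + squareWaveCorrelation p q (1 / 4 - α) (1 / 4 - β)) / 2) := by
  set E := {t : ℝ | SignType.sign (Real.cos (2 * π * (p * t - α))) =
    SignType.sign (Real.cos (2 * π * (q * t - β)))}
  have hzeros : {t : ℝ | Real.cos (2 * π * (p * t - α)) = 0 ∨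
      Real.cos (2 * π * (q * t - β)) = 0}.Countable :=
    (countable_setOf_cos_eq_zero (Int.cast_ne_zero.2 hp) α).union
      (countable_setOf_cos_eq_zero (Int.cast_ne_zero.2 hq) β)
  have hfrontier : volume (frontier E) = 0 :=
    (hzeros.mono (frontier_setOf_sign_eq_sign_subset (by fun_prop) (by fun_prop))).measure_zero _
  have hE : E =ᵐ[volume]
      {t : ℝ | squareWave (p * t + (1 / 4 - α)) = squareWave (q * t + (1 / 4 - β))} := by
    filter_upwards [hzeros.ae_notMem volume] with t ht
    obtain ⟨htp, htq⟩ := not_or.1 ht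
    exact propext (sign_cos_eq_sign_cos_iff htp htq)
  have hdensity := ha.hasNatDensity_fract_mem hfrontier
  rw [measureReal_congr (ae_eq_set_inter hE (ae_eq_refl (Set.Icc 0 1))),
    volume_real_squareWave_eq_squareWave] at hdensity
  simpa only [E, Set.mem_ofPred_eq, cos_two_pi_mul_fract] using hdensity

lemma isEquivalent_of_exists_eq_one_add_mul {ι : Type*} {l : Filter ι} {u a s : ι → ℝ}
    (h : ∃ ε : ι → ℝ, Tendsto ε l (𝓝 0) ∧ ∀ n, u n = (1 + ε n) * a n * s n) :
    u ~[l] fun n => a n * s n := by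
  obtain ⟨ε, hε, hu⟩ := h
  exact isEquivalent_iff_exists_eq_mul.2 ⟨fun n => 1 + ε n, by simpa using hε.const_add 1,
    Eventually.of_forall fun n => by simp [hu, mul_assoc]⟩

lemma eventually_sign_eq_of_isEquivalent {ι : Type*} {l : Filter ι} {u v : ι → ℝ}
    (h : u ~[l] v) : ∀ᶠ n in l, SignType.sign (u n) = SignType.sign (v n) := by
  obtain ⟨r, hr, hur⟩ := h.exists_eq_mul
  filter_upwards [hr.eventually_const_lt one_pos, hur] with n hn hun
  rw [hun, Pi.mul_apply, sign_mul, sign_pos hn, one_mul]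

lemma sign_mul_eq_sign_mul_iff {R : Type*} [Ring R] [LinearOrder R] [IsStrictOrderedRing R]
    {a b : R} (hab : 0 < a * b) (s t : R) :
    SignType.sign (a * s) = SignType.sign (b * t) ↔ SignType.sign s = SignType.sign t := by
  rcases pos_and_pos_or_neg_and_neg_of_mul_pos hab with ⟨ha, hb⟩ | ⟨ha, hb⟩ <;>
    simp [sign_mul, sign_pos, ha, hb]

lemma sgn_eq_sgn_iff {a b : ℝ} : sgn a = sgn b ↔ SignType.sign a = SignType.sign b := by
  have hsgn (t : ℝ) : sgn t = SignType.sign t := by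
    simp only [sgn, sign_apply]
    split_ifs <;> simp
  rw [hsgn, hsgn, signType_cast_inj]

end SignAgreement

theorem sign_correlation_universality_general {u v a b μ : ℕ → ℝ} {ξ η α β : ℝ}
    (hu : u ~[atTop] fun n => a n * Real.cos (2 * π * (μ n * ξ - α)))
    (hv : v ~[atTop] fun n => b n * Real.cos (2 * π * (μ n * η - β)))
    (hab : ∀ᶠ n in atTop, 0 < a n * b n) (hne : |ξ| ≠ |η|)
    {p q : ℤ} (hp : p ≠ 0) (hq : q ≠ 0) (hcop : IsCoprime p q) (hpq : q * ξ = p * η)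
    (hequi : EquidistributedMod1 fun n => μ n * ξ / p) :
    ∃ L : ℝ, 1 / 3 ≤ L ∧ L ≤ 2 / 3 ∧ HasNatDensity (fun n => sgn (u n) = sgn (v n)) L := by
  have hp' : (p : ℝ) ≠ 0 := Int.cast_ne_zero.2 hp
  have hnatAbs : p.natAbs ≠ q.natAbs := fun h => hne <| by
    have habs : |(p : ℝ)| = |(q : ℝ)| := by
      rw [← Int.cast_abs, ← Int.cast_abs, Int.abs_eq_natAbs, h, Int.abs_eq_natAbs]
    have hmul := congrArg abs hpq
    rw [abs_mul, abs_mul, ← habs] at hmul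
    exact mul_left_cancel₀ (abs_ne_zero.2 hp') hmul
  have hcorr := abs_le.1
    (abs_squareWaveCorrelation_le hp hq hcop hnatAbs (1 / 4 - α) (1 / 4 - β))
  refine ⟨_, by linarith, by linarith,
    (hequi.hasNatDensity_sign_cos_eq hp hq α β).congr' ?_⟩
  filter_upwards [eventually_sign_eq_of_isEquivalent hu, eventually_sign_eq_of_isEquivalent hv,
    hab] with n hun hvn habn
  have hξ : (p : ℝ) * (μ n * ξ / p) = μ n * ξ := mul_div_cancel₀ _ hp'
  have hη : (q : ℝ) * (μ n * ξ / p) = μ n * η := by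
    field_simp
    linear_combination μ n * hpq
  rw [sgn_eq_sgn_iff, hun, hvn, sign_mul_eq_sign_mul_iff habn, hξ, hη]

theorem sign_correlation_universality
    (D : Set ℝ) (w : ℕ → ℝ → ℝ) (φ : ℝ → ℕ → ℝ) (ϕ : ℝ → ℝ) (θ : ℝ) (μ : ℕ → ℝ)
    (hasympt : ∀ z ∈ D, ∃ ε : ℕ → ℝ, Tendsto ε atTop (nhds 0) ∧
      ∀ n, w n z = (1 + ε n) * φ z n * Real.cos (2 * π * (μ n * ϕ z - θ)))
    (x y : ℝ) (hx : x ∈ D) (hy : y ∈ D) (hxy : x ≠ y)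
    (h1 : ϕ x ≠ ϕ y) (h2 : ϕ x ≠ -ϕ y)
    (hφ : ∀ n, φ x n * φ y n > 0)
    (p q : ℤ) (hp : p ≠ 0) (hq : q ≠ 0) (hcop : IsCoprime p q)
    (hpq : (q : ℝ) * ϕ x = (p : ℝ) * ϕ y)
    (hequi : ∀ r : ℤ, r ≠ 0 →
      EquidistributedMod1 (fun n => μ n * ϕ x / (r : ℝ)) ∧
      EquidistributedMod1 (fun n => μ n * ϕ y / (r : ℝ))) :
    ∃ L : ℝ, 1/3 ≤ L ∧ L ≤ 2/3 ∧
      Tendsto (fun N : ℕ =>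
        (((Finset.range N).filter (fun n => sgn (w n x) = sgn (w n y))).card : ℝ) / N)
        atTop (nhds L) := by
  simpa only [hasNatDensity_iff] using sign_correlation_universality_general
    (isEquivalent_of_exists_eq_one_add_mul (hasympt x hx))
    (isEquivalent_of_exists_eq_one_add_mul (hasympt y hy)) (Eventually.of_forall hφ)
    (mt abs_eq_abs.1 (not_or.2 ⟨h1, h2⟩)) hp hq hcop hpq (hequi p hp).1
end

section
/- Let D ⊆ ℝ, let w_n : D → ℝ (n ∈ ℕ), φ : D × ℕ → ℝ, ϕ : D → ℝ, θ ∈ ℝ, and let (μ_n) be a sequence of reals. Suppose x, y ∈ D are such that there are sequences ε_n(x) → 0 and ε_n(y) → 0 with w_n(x) = (1 + ε_n(x)) · φ(x,n) · cos(2π(μ_n ϕ(x) − θ)) and w_n(y) = (1 + ε_n(y)) · φ(y,n) · cos(2π(μ_n ϕ(y) − θ)) for all n, and that φ(x,n) · φ(y,n) > 0 for all n. If the sequence of pairs (μ_n ϕ(x), μ_n ϕ(y)) is equidistributed modulo 1 in ℝ², then (1/N) · #{0 ≤ n < N : sgn(w_n(x)) = sgn(w_n(y))} → 1/2 as N → ∞.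 -/
open Filter Real MeasureTheory
open scoped Classical

def EquidistributedMod1Pair (a b : ℕ → ℝ) : Prop :=
  ∀ c₁ d₁ c₂ d₂ : ℝ, 0 ≤ c₁ → c₁ ≤ d₁ → d₁ ≤ 1 → 0 ≤ c₂ → c₂ ≤ d₂ → d₂ ≤ 1 →
    Tendsto (fun N : ℕ =>
      (((Finset.range N).filter (fun n =>
        Int.fract (a n) ∈ Set.Icc c₁ d₁ ∧ Int.fract (b n) ∈ Set.Icc c₂ d₂)).card : ℝ) / N)
      atTop (nhds ((d₁ - c₁) * (d₂ - c₂)))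

/-!
Up to a constant sign, `cos (2π(t - θ))` is `sin (2π(fract t - s))` for some `s ∈ [0, 1/2)`, and the
sign of the latter records whether `fract t` lies in the half interval `[s, s + 1/2]`, except at the
endpoints, which the equidistributed sequences avoid outside a set of density `0`. By
equidistribution the two events "`fract` lies in the half interval" each have density `1/2` and
jointly `1/4`, so they agree with density `1 - 1/2 - 1/2 + 2 · 1/4 = 1/2`.
-/

/-- The natural density of a set of natural numbers. It is encoded through the averages of the
indicator function, rather than by cardinalities, so that densities add up linearly and no
decidability instance is involved. -/
def HasNaturalDensity (S : Set ℕ) (d : ℝ) : Prop :=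
  Tendsto (fun N : ℕ => (∑ n ∈ Finset.range N, S.indicator (1 : ℕ → ℝ) n) / N) atTop (nhds d)

theorem hasNaturalDensity_ofPred_iff_tendsto_card {p : ℕ → Prop} [DecidablePred p] {d : ℝ} :
    HasNaturalDensity {n | p n} d ↔
      Tendsto (fun N : ℕ => (((Finset.range N).filter p).card : ℝ) / N) atTop (nhds d) := by
  simp [HasNaturalDensity, Set.indicator_apply]

theorem hasNaturalDensity_univ : HasNaturalDensity Set.univ 1 := by
  refine tendsto_const_nhds.congr' ?_
  filter_upwards [eventually_ne_atTop 0] with N hN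
  simp [hN]

theorem hasNaturalDensity_zero_of_eventually_notMem {S : Set ℕ} (h : ∀ᶠ n in atTop, n ∉ S) :
    HasNaturalDensity S 0 := by
  have hlim : Tendsto (S.indicator (1 : ℕ → ℝ)) atTop (nhds 0) :=
    tendsto_const_nhds.congr' (h.mono fun n hn => (Set.indicator_of_notMem hn _).symm)
  exact hlim.cesaro.congr fun N => inv_mul_eq_div _ _

namespace HasNaturalDensity

variable {A B Z : Set ℕ} {p q m : ℝ}

theorem compl (hA : HasNaturalDensity A p) : HasNaturalDensity Aᶜ (1 - p) := by
  refine (hasNaturalDensity_univ.sub hA).congr fun N => ?_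
  simp only [← sub_div, ← Finset.sum_sub_distrib, Set.indicator_compl, Set.indicator_univ,
    Pi.sub_apply]

theorem ofPred_mem_iff_mem (hA : HasNaturalDensity A p) (hB : HasNaturalDensity B q)
    (hAB : HasNaturalDensity (A ∩ B) m) :
    HasNaturalDensity {n | n ∈ A ↔ n ∈ B} (1 - p - q + 2 * m) := by
  refine (((hasNaturalDensity_univ.sub hA).sub hB).add (hAB.const_mul 2)).congr fun N => ?_
  simp only [← mul_div_assoc, ← sub_div, ← add_div, Finset.mul_sum, ← Finset.sum_sub_distrib,
    ← Finset.sum_add_distrib]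
  congr! 2 with n
  by_cases hnA : n ∈ A <;> by_cases hnB : n ∈ B <;> norm_num [hnA, hnB]

theorem congr_off_null (hA : HasNaturalDensity A p) (hZ : HasNaturalDensity Z 0)
    (h : ∀ᶠ n in atTop, n ∉ Z → (n ∈ B ↔ n ∈ A)) : HasNaturalDensity B p := by
  set E : Set ℕ := {n | n ∉ Z ∧ ¬(n ∈ B ↔ n ∈ A)}
  have hE : HasNaturalDensity E 0 :=
    hasNaturalDensity_zero_of_eventually_notMem (h.mono fun n hn hnE => hnE.2 (hn hnE.1))
  have hpoint (n : ℕ) : |B.indicator (1 : ℕ → ℝ) n - A.indicator 1 n| ≤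
      Z.indicator 1 n + E.indicator 1 n := by
    by_cases hnA : n ∈ A <;> by_cases hnB : n ∈ B <;> by_cases hnZ : n ∈ Z <;>
      simp [E, hnA, hnB, hnZ]
  have hdiff : Tendsto (fun N : ℕ => (∑ n ∈ Finset.range N,
      (B.indicator (1 : ℕ → ℝ) n - A.indicator 1 n)) / N) atTop (nhds 0) := by
    refine squeeze_zero_norm (fun N => ?_) (add_zero (0 : ℝ) ▸ hZ.add hE)
    rw [norm_div, Real.norm_natCast, ← add_div, ← Finset.sum_add_distrib]
    gcongr
    exact (Finset.abs_sum_le_sum_abs _ _).trans (Finset.sum_le_sum fun n _ => hpoint n)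
  refine (add_zero p ▸ hA.add hdiff).congr fun N => ?_
  rw [← add_div, ← Finset.sum_add_distrib]
  simp only [add_sub_cancel]

theorem union_null (hA : HasNaturalDensity A p) (hZ : HasNaturalDensity Z 0) :
    HasNaturalDensity (A ∪ Z) p :=
  hA.congr_off_null hZ <| .of_forall fun _ hn => or_iff_left hn

end HasNaturalDensity

theorem mul_pos_iff_pos_iff_pos {R : Type*} [Ring R] [LinearOrder R] [IsStrictOrderedRing R]
    {x y : R} (hx : x ≠ 0) (hy : y ≠ 0) : 0 < x * y ↔ (0 < x ↔ 0 < y) := by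
  rcases hx.lt_or_gt with hx | hx <;> rcases hy.lt_or_gt with hy | hy <;>
    simp [hx, hy, hx.not_gt, hy.not_gt, mul_pos_iff]

theorem sgn_eq_sgn_iff_mul_pos {a b : ℝ} (ha : a ≠ 0) (hb : b ≠ 0) :
    sgn a = sgn b ↔ 0 < a * b := by
  unfold sgn
  rcases ha.lt_or_gt with ha | ha <;> rcases hb.lt_or_gt with hb | hb <;>
    norm_num [ha, hb, ha.not_gt, hb.not_gt, mul_pos_iff]

section Sine

variable {s u : ℝ}

theorem sin_two_pi_mul_sub_pos_iff (hsu : s - 1 / 2 ≤ u) (hus : u ≤ s + 1) :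
    0 < sin (2 * π * (u - s)) ↔ u ∈ Set.Ioo s (s + 1 / 2) := by
  have hπ := pi_pos
  refine ⟨fun h => ⟨?_, ?_⟩, fun ⟨h₁, h₂⟩ => sin_pos_of_pos_of_lt_pi ?_ ?_⟩
  · by_contra! hle
    exact h.not_ge (sin_nonpos_of_nonpos_of_neg_pi_le (by nlinarith) (by nlinarith))
  · by_contra! hle
    rw [← sin_sub_two_pi] at h
    exact h.not_ge (sin_nonpos_of_nonpos_of_neg_pi_le (by nlinarith) (by nlinarith))
  all_goals nlinarith

theorem sin_two_pi_mul_sub_neg_iff (hsu : s - 1 / 2 < u) (hus : u < s + 1) :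
    sin (2 * π * (u - s)) < 0 ↔ u ∉ Set.Icc s (s + 1 / 2) := by
  have hπ := pi_pos
  refine ⟨fun h ⟨h₁, h₂⟩ => h.not_ge ?_, fun h => ?_⟩
  · exact sin_nonneg_of_nonneg_of_le_pi (by nlinarith) (by nlinarith)
  · rcases not_and_or.1 h with hlt | hlt <;> rw [not_le] at hlt
    · exact sin_neg_of_neg_of_neg_pi_lt (by nlinarith) (by nlinarith)
    · rw [← sin_sub_two_pi]
      exact sin_neg_of_neg_of_neg_pi_lt (by nlinarith) (by nlinarith)

theorem sin_two_pi_mul_sub_eq_zero_iff (hsu : s - 1 / 2 < u) (hus : u < s + 1) :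
    sin (2 * π * (u - s)) = 0 ↔ u = s ∨ u = s + 1 / 2 := by
  calc sin (2 * π * (u - s)) = 0
      ↔ ¬sin (2 * π * (u - s)) < 0 ∧ ¬0 < sin (2 * π * (u - s)) := by
        rw [not_lt, not_lt, and_comm, le_antisymm_iff]
    _ ↔ u ∈ Set.Icc s (s + 1 / 2) \ Set.Ioo s (s + 1 / 2) := by
        rw [sin_two_pi_mul_sub_neg_iff hsu hus, sin_two_pi_mul_sub_pos_iff hsu.le hus.le, not_not,
          Set.mem_sdiff]
    _ ↔ u = s ∨ u = s + 1 / 2 := by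
        rw [Set.Icc_sdiff_Ioo_same (by linarith), Set.mem_insert_iff, Set.mem_singleton_iff]

theorem sin_two_pi_mul_sub_pos_iff_of_ne_zero (hsu : s - 1 / 2 < u) (hus : u < s + 1)
    (hne : sin (2 * π * (u - s)) ≠ 0) :
    0 < sin (2 * π * (u - s)) ↔ u ∈ Set.Icc s (s + 1 / 2) := by
  rw [← hne.symm.le_iff_lt, ← not_lt, sin_two_pi_mul_sub_neg_iff hsu hus, not_not]

theorem exists_cos_two_pi_mul_sub_eq_mul_sin_fract (θ : ℝ) :
    ∃ s c : ℝ, 0 ≤ s ∧ s < 1 / 2 ∧ c ≠ 0 ∧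
      ∀ t : ℝ, cos (2 * π * (t - θ)) = c * sin (2 * π * (Int.fract t - s)) := by
  refine ⟨Int.fract (2 * θ - 1 / 2) / 2, (-1) ^ ⌊2 * θ - 1 / 2⌋, ?_, ?_, ?_, fun t => ?_⟩
  · linarith [Int.fract_nonneg (2 * θ - 1 / 2)]
  · linarith [Int.fract_lt_one (2 * θ - 1 / 2)]
  · exact zpow_ne_zero _ (by norm_num)
  · have hangle : 2 * π * (t - θ) =
        2 * π * (Int.fract t - Int.fract (2 * θ - 1 / 2) / 2) - π / 2
          + ⌊t⌋ * (2 * π) - ⌊2 * θ - 1 / 2⌋ * π := by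
      linear_combination
        (-2 * π) * Int.floor_add_fract t + π * Int.floor_add_fract (2 * θ - 1 / 2)
    rw [hangle, cos_sub_int_mul_pi, cos_add_int_mul_two_pi, cos_sub_pi_div_two]

end Sine

namespace EquidistributedMod1Pair

variable {a b : ℕ → ℝ}

theorem swap (h : EquidistributedMod1Pair a b) : EquidistributedMod1Pair b a := by
  intro c₁ d₁ c₂ d₂ hc₁ hcd₁ hd₁ hc₂ hcd₂ hd₂
  simpa only [and_comm, mul_comm] using h c₂ d₂ c₁ d₁ hc₂ hcd₂ hd₂ hc₁ hcd₁ hd₁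

theorem hasNaturalDensity_fract_mem_Icc (h : EquidistributedMod1Pair a b) {c d : ℝ}
    (hc : 0 ≤ c) (hcd : c ≤ d) (hd : d ≤ 1) :
    HasNaturalDensity {n | Int.fract (a n) ∈ Set.Icc c d} (d - c) := by
  have hstrip := hasNaturalDensity_ofPred_iff_tendsto_card.2
    (h c d 0 1 hc hcd hd le_rfl zero_le_one le_rfl)
  simpa [Int.fract_nonneg, (Int.fract_lt_one _).le] using hstrip

theorem hasNaturalDensity_fract_eq (h : EquidistributedMod1Pair a b) {c : ℝ}
    (hc₀ : 0 ≤ c) (hc₁ : c ≤ 1) : HasNaturalDensity {n | Int.fract (a n) = c} 0 := by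
  simpa using h.hasNaturalDensity_fract_mem_Icc hc₀ le_rfl hc₁

theorem hasNaturalDensity_cos_eq_zero (h : EquidistributedMod1Pair a b) (α : ℝ) :
    HasNaturalDensity {n | cos (2 * π * (a n - α)) = 0} 0 := by
  obtain ⟨s, c, hs₀, hs, hc, hcos⟩ := exists_cos_two_pi_mul_sub_eq_mul_sin_fract α
  have hzero (n : ℕ) : cos (2 * π * (a n - α)) = 0 ↔
      Int.fract (a n) = s ∨ Int.fract (a n) = s + 1 / 2 := by
    rw [hcos, mul_eq_zero_iff_left hc, sin_two_pi_mul_sub_eq_zero_iff] <;>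
      linarith [Int.fract_nonneg (a n), Int.fract_lt_one (a n)]
  simp only [hzero]
  exact (h.hasNaturalDensity_fract_eq hs₀ (by linarith)).union_null
    (h.hasNaturalDensity_fract_eq (by linarith) (by linarith))

theorem hasNaturalDensity_fract_mem_Icc_iff_fract_mem_Icc (h : EquidistributedMod1Pair a b)
    {s t : ℝ} (hs₀ : 0 ≤ s) (hs : s ≤ 1 / 2) (ht₀ : 0 ≤ t) (ht : t ≤ 1 / 2) :
    HasNaturalDensity
      {n | Int.fract (a n) ∈ Set.Icc s (s + 1 / 2) ↔ Int.fract (b n) ∈ Set.Icc t (t + 1 / 2)}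
      (1 / 2) := by
  have hA := h.hasNaturalDensity_fract_mem_Icc hs₀ (d := s + 1 / 2) (by linarith) (by linarith)
  have hB := h.swap.hasNaturalDensity_fract_mem_Icc ht₀ (d := t + 1 / 2) (by linarith)
    (by linarith)
  have hAB := hasNaturalDensity_ofPred_iff_tendsto_card.2
    (h s (s + 1 / 2) t (t + 1 / 2) hs₀ (by linarith) (by linarith) ht₀ (by linarith) (by linarith))
  have hdensity : 1 - (s + 1 / 2 - s) - (t + 1 / 2 - t) +
      2 * ((s + 1 / 2 - s) * (t + 1 / 2 - t)) = 1 / 2 := by ring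
  have hagree := hA.ofPred_mem_iff_mem hB hAB
  rw [hdensity] at hagree
  exact hagree

theorem hasNaturalDensity_cos_mul_cos_pos (h : EquidistributedMod1Pair a b) (α β : ℝ) :
    HasNaturalDensity {n | 0 < cos (2 * π * (a n - α)) * cos (2 * π * (b n - β))} (1 / 2) := by
  have hnull := (h.hasNaturalDensity_cos_eq_zero α).union_null
    (h.swap.hasNaturalDensity_cos_eq_zero β)
  obtain ⟨s, c, hs₀, hs, hc, hcosα⟩ := exists_cos_two_pi_mul_sub_eq_mul_sin_fract α
  obtain ⟨t, d, ht₀, ht, hd, hcosβ⟩ := exists_cos_two_pi_mul_sub_eq_mul_sin_fract β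
  have hagree := h.hasNaturalDensity_fract_mem_Icc_iff_fract_mem_Icc hs₀ hs.le ht₀ ht.le
  have hpos (n : ℕ) (hn : n ∉ {n | cos (2 * π * (a n - α)) = 0} ∪
        {n | cos (2 * π * (b n - β)) = 0}) :
      0 < cos (2 * π * (a n - α)) * cos (2 * π * (b n - β)) ↔ (0 < c * d ↔
        (Int.fract (a n) ∈ Set.Icc s (s + 1 / 2) ↔ Int.fract (b n) ∈ Set.Icc t (t + 1 / 2))) := by
    rw [Set.mem_union, not_or, Set.mem_ofPred_eq, Set.mem_ofPred_eq, hcosα, hcosβ] at hn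
    have hsinα := right_ne_zero_of_mul hn.1
    have hsinβ := right_ne_zero_of_mul hn.2
    rw [hcosα, hcosβ, mul_mul_mul_comm,
      mul_pos_iff_pos_iff_pos (mul_ne_zero hc hd) (mul_ne_zero hsinα hsinβ),
      mul_pos_iff_pos_iff_pos hsinα hsinβ, sin_two_pi_mul_sub_pos_iff_of_ne_zero ?_ ?_ hsinα,
      sin_two_pi_mul_sub_pos_iff_of_ne_zero ?_ ?_ hsinβ] <;>
      linarith [Int.fract_nonneg (a n), Int.fract_lt_one (a n), Int.fract_nonneg (b n),
        Int.fract_lt_one (b n)]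
  by_cases hcd : 0 < c * d <;> simp only [hcd, true_iff, false_iff] at hpos
  · exact hagree.congr_off_null hnull (.of_forall hpos)
  · exact sub_half (1 : ℝ) ▸ hagree.compl.congr_off_null hnull (.of_forall hpos)

end EquidistributedMod1Pair

theorem eventually_one_add_mul_mul_pos {ι : Type*} {l : Filter ι} {ε δ r q : ι → ℝ}
    (hε : Tendsto ε l (nhds 0)) (hδ : Tendsto δ l (nhds 0)) (hrq : ∀ᶠ i in l, 0 < r i * q i) :
    ∀ᶠ i in l, 0 < ((1 + ε i) * r i) * ((1 + δ i) * q i) := by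
  filter_upwards [hε.eventually_const_lt neg_one_lt_zero,
    hδ.eventually_const_lt neg_one_lt_zero, hrq] with i hεi hδi hrqi
  rw [mul_mul_mul_comm]
  exact mul_pos (mul_pos (by linarith) (by linarith)) hrqi

theorem sign_correlation_generic_half_general {a b r q : ℕ → ℝ} {α β : ℝ}
    (hab : EquidistributedMod1Pair a b) (hrq : ∀ᶠ n in atTop, 0 < r n * q n) :
    Tendsto (fun N : ℕ =>
      (((Finset.range N).filter (fun n => sgn (r n * cos (2 * π * (a n - α))) =
        sgn (q n * cos (2 * π * (b n - β))))).card : ℝ) / N) atTop (nhds (1 / 2)) := by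
  have hnull := (hab.hasNaturalDensity_cos_eq_zero α).union_null
    (hab.swap.hasNaturalDensity_cos_eq_zero β)
  refine hasNaturalDensity_ofPred_iff_tendsto_card.1
    ((hab.hasNaturalDensity_cos_mul_cos_pos α β).congr_off_null hnull ?_)
  filter_upwards [hrq] with n hn hnZ
  obtain ⟨hcosα, hcosβ⟩ := not_or.1 hnZ
  rw [sgn_eq_sgn_iff_mul_pos (mul_ne_zero (left_ne_zero_of_mul hn.ne') hcosα)
      (mul_ne_zero (right_ne_zero_of_mul hn.ne') hcosβ),
    mul_mul_mul_comm, mul_pos_iff_of_pos_left hn]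

theorem sign_correlation_generic_half
    (D : Set ℝ) (w : ℕ → ℝ → ℝ) (φ : ℝ → ℕ → ℝ) (ϕ : ℝ → ℝ) (θ : ℝ) (μ : ℕ → ℝ)
    (x y : ℝ) (hx : x ∈ D) (hy : y ∈ D)
    (hax : ∃ ε : ℕ → ℝ, Tendsto ε atTop (nhds 0) ∧
      ∀ n, w n x = (1 + ε n) * φ x n * Real.cos (2 * π * (μ n * ϕ x - θ)))
    (hay : ∃ ε : ℕ → ℝ, Tendsto ε atTop (nhds 0) ∧
      ∀ n, w n y = (1 + ε n) * φ y n * Real.cos (2 * π * (μ n * ϕ y - θ)))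
    (hφ : ∀ n, φ x n * φ y n > 0)
    (hequi : EquidistributedMod1Pair (fun n => μ n * ϕ x) (fun n => μ n * ϕ y)) :
    Tendsto (fun N : ℕ =>
      (((Finset.range N).filter (fun n => sgn (w n x) = sgn (w n y))).card : ℝ) / N)
      atTop (nhds (1/2)) := by
  obtain ⟨ε, hε, hwx⟩ := hax
  obtain ⟨δ, hδ, hwy⟩ := hay
  simpa only [hwx, hwy] using
    sign_correlation_generic_half_general hequi
      (eventually_one_add_mul_mul_pos hε hδ (.of_forall hφ))
end

section
/- Let V : ℝ → ℝ be an even, locally Lebesgue-integrable function with ess inf V > −∞ and V(x) → ∞ as |x| → ∞. Let (λ_n) be a sequence of positive reals with λ_n → ∞, and let w_n : ℝ → ℝ be twice differentiable functions satisfying w_n''(x) = 4π²(V(x) − λ_n)·w_n(x) for all x ∈ ℝ (i.e., −(1/4π²)w_n'' + V w_n = λ_n w_n). Assume: (H1) w_n is an even function when n is even and an odd function when n is odd; (H3) sgn(w_{2n}(0)) = (−1)^n and sgn(w'_{2n+1}(0)) = (−1)^n for all n. Set A_n := (w_n(0)² + w_n'(0)²/(4π²λ_n))^{1/2} (note A_n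 > 0 by (H3)). Then for every R > 0, sup_{|x| ≤ R} |w_n(x) − A_n · cos(2π(√λ_n · x − n/4))| / A_n → 0 as n → ∞; that is, the WKB asymptotic w_n(x) = (1 + o_n(1)) · A_n · cos(2π(√λ_n x − n/4)) holds uniformly on compact subsets of ℝ. -/
open Filter Real MeasureTheory
open scoped Classical

/-!
Write the equation as `w'' + k² w = q w` with `q = 4π² V` and `k = 2π √λ`. By variation of constants
`w` differs from the free oscillation with the same data at `0` by the integral of `q w` against
`sin (k (x - t)) / k`. On `[-R, R]` this is at most `(C / k) sup |w|`, where `C = ∫ |q|`, and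
absorbing `sup |w|` on the left leaves the bound `C / (k - C)` times the amplitude of the free
oscillation. Parity kills one of `w 0`, `w' 0`, and the sign of the other one makes `n π / 2` the
phase.
-/

open Set (Icc uIcc)

section Duhamel

variable {E : Type*} [NormedAddCommGroup E] [NormedSpace ℝ E]

/-- The solution of the harmonic oscillator `u'' = -k² u` with `u 0 = a` and `u' 0 = b`. It is
meant for `k ≠ 0`: at `k = 0` the convention `0 / 0 = 0` gives the constant `a`. -/
noncomputable def freeSolution (k : ℝ) (a b : E) (x : ℝ) : E :=
  cos (k * x) • a + (sin (k * x) / k) • b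

/-- Solutions `w`, with derivative `w'`, of the Schrödinger equation `w'' = (q - k²) w` on `s`. The
derivatives are two-sided, also at boundary points of `s`. -/
structure IsSchrodingerSolution (q : ℝ → ℝ) (k : ℝ) (s : Set ℝ) (w w' : ℝ → E) : Prop where
  hasDerivAt : ∀ x ∈ s, HasDerivAt w (w' x) x
  hasDerivAt_deriv : ∀ x ∈ s, HasDerivAt w' ((q x - k ^ 2) • w x) x

theorem freeSolution_zero (k : ℝ) (a b : E) : freeSolution k a b 0 = a := by
  simp [freeSolution]

/-- Transporting the Cauchy data of a solution back along the free flow removes the term `-k² w`,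
so only the forcing `f` is left in the derivative. -/
theorem hasDerivAt_freeSolution_sub {w w' : ℝ → E} {f : E} {k t : ℝ} (hk : k ≠ 0) (x : ℝ)
    (hw : HasDerivAt w (w' t) t) (hw' : HasDerivAt w' (f - k ^ 2 • w t) t) :
    HasDerivAt (fun t => freeSolution k (w t) (w' t) (x - t)) ((sin (k * (x - t)) / k) • f) t := by
  have hphase : HasDerivAt (fun t => k * (x - t)) (-k) t := by
    simpa using ((hasDerivAt_id t).const_sub x).const_mul k
  refine ((hphase.cos.smul hw).add ((hphase.sin.div_const k).smul hw')).congr_deriv ?_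
  match_scalars <;> field_simp <;> ring

theorem sub_freeSolution_eq_duhamel [CompleteSpace E] {f w w' : ℝ → E} {k x₀ x : ℝ} (hk : k ≠ 0)
    (hw : ∀ t ∈ uIcc x₀ x, HasDerivAt w (w' t) t)
    (hw' : ∀ t ∈ uIcc x₀ x, HasDerivAt w' (f t - k ^ 2 • w t) t)
    (hf : IntervalIntegrable f volume x₀ x) :
    w x - freeSolution k (w x₀) (w' x₀) (x - x₀) =
      ∫ t in x₀..x, (sin (k * (x - t)) / k) • f t := by
  rw [intervalIntegral.integral_eq_sub_of_hasDerivAt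
    (fun t ht => hasDerivAt_freeSolution_sub hk x (hw t ht) (hw' t ht))
    (hf.continuousOn_smul (by fun_prop)), sub_self, freeSolution_zero]

end Duhamel

section Perturbation

theorem norm_sub_le_of_forall_norm_le {X F : Type*} [TopologicalSpace X] [SeminormedAddCommGroup F]
    {f g : X → F} {s : Set X} (hs : IsCompact s) (hf : ContinuousOn f s) {A δ : ℝ} (hδ₀ : 0 ≤ δ)
    (hδ₁ : δ < 1) (hg : ∀ x ∈ s, ‖g x‖ ≤ A)
    (hfg : ∀ M, (∀ x ∈ s, ‖f x‖ ≤ M) → ∀ x ∈ s, ‖f x - g x‖ ≤ δ * M) {x : X} (hx : x ∈ s) :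
    ‖f x - g x‖ ≤ δ / (1 - δ) * A := by
  obtain ⟨y, hy, hmax⟩ := hs.exists_isMaxOn ⟨x, hx⟩ hf.norm
  have hbound : ∀ z ∈ s, ‖f z - g z‖ ≤ δ * ‖f y‖ := hfg _ fun z hz => hmax hz
  have hfy : ‖f y‖ ≤ A / (1 - δ) := by
    rw [le_div_iff₀ (sub_pos.2 hδ₁)]
    linarith [norm_le_norm_sub_add (f y) (g y), hbound y hy, hg y hy]
  calc ‖f x - g x‖ ≤ δ * ‖f y‖ := hbound x hx
    _ ≤ δ * (A / (1 - δ)) := by gcongr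
    _ = δ / (1 - δ) * A := by ring

namespace IsSchrodingerSolution

variable {E : Type*} [NormedAddCommGroup E] [NormedSpace ℝ E]
  {q : ℝ → ℝ} {k a b x₀ x : ℝ} {w w' : ℝ → E}

theorem continuousOn {s : Set ℝ} (h : IsSchrodingerSolution q k s w w') : ContinuousOn w s :=
  fun x hx => (h.hasDerivAt x hx).continuousAt.continuousWithinAt

theorem sub_freeSolution_eq_integral [CompleteSpace E]
    (h : IsSchrodingerSolution q k (uIcc x₀ x) w w') (hk : k ≠ 0)
    (hq : IntervalIntegrable q volume x₀ x) :
    w x - freeSolution k (w x₀) (w' x₀) (x - x₀) =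
      ∫ t in x₀..x, (sin (k * (x - t)) / k) • q t • w t :=
  sub_freeSolution_eq_duhamel hk h.hasDerivAt
    (fun t ht => by simpa only [sub_smul] using h.hasDerivAt_deriv t ht)
    (hq.smul_continuousOn h.continuousOn)

theorem mono {s t : Set ℝ} (h : IsSchrodingerSolution q k t w w') (hst : s ⊆ t) :
    IsSchrodingerSolution q k s w w' :=
  ⟨fun x hx => h.hasDerivAt x (hst hx), fun x hx => h.hasDerivAt_deriv x (hst hx)⟩

theorem norm_sub_freeSolution_le_mul [CompleteSpace E]
    (h : IsSchrodingerSolution q k (Icc a b) w w') (hk : 0 < k) (hq : IntegrableOn q (Icc a b))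
    {M : ℝ} (hM : ∀ t ∈ Icc a b, ‖w t‖ ≤ M) (hx₀ : x₀ ∈ Icc a b) (hx : x ∈ Icc a b) :
    ‖w x - freeSolution k (w x₀) (w' x₀) (x - x₀)‖ ≤ (∫ t in Icc a b, |q t|) / k * M := by
  have hsub : uIcc x₀ x ⊆ Icc a b := Set.uIcc_subset_Icc hx₀ hx
  have hsub' : Set.uIoc x₀ x ⊆ Icc a b := Set.uIoc_subset_uIcc.trans hsub
  have hM₀ : 0 ≤ M := (norm_nonneg _).trans (hM x hx)
  have hint : IntegrableOn (fun t => |q t| * (M / k)) (Icc a b) := hq.abs.mul_const _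
  have hpoint (t : ℝ) (ht : t ∈ Set.uIoc x₀ x) :
      ‖(sin (k * (x - t)) / k) • q t • w t‖ ≤ |q t| * (M / k) :=
    calc ‖(sin (k * (x - t)) / k) • q t • w t‖
        = |sin (k * (x - t))| / k * (|q t| * ‖w t‖) := by
          simp only [norm_smul, norm_eq_abs, abs_div, abs_of_pos hk]
      _ ≤ 1 / k * (|q t| * M) := by
          gcongr
          exacts [abs_sin_le_one _, hM t (hsub' ht)]
      _ = |q t| * (M / k) := by ring
  rw [(h.mono hsub).sub_freeSolution_eq_integral hk.ne' (hq.mono_set hsub).intervalIntegrable]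
  calc ‖∫ t in x₀..x, (sin (k * (x - t)) / k) • q t • w t‖
      ≤ ∫ t in Set.uIoc x₀ x, |q t| * (M / k) := by
        rw [intervalIntegral.norm_intervalIntegral_eq]
        exact norm_integral_le_of_norm_le (hint.mono_set hsub')
          ((ae_restrict_iff' measurableSet_uIoc).2 (ae_of_all _ hpoint))
    _ ≤ ∫ t in Icc a b, |q t| * (M / k) :=
        setIntegral_mono_set hint (ae_of_all _ fun t => by positivity) hsub'.eventuallyLE
    _ = (∫ t in Icc a b, |q t|) / k * M := by rw [integral_mul_const]; ring

theorem norm_sub_freeSolution_le [CompleteSpace E]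
    (h : IsSchrodingerSolution q k (Icc a b) w w') (hq : IntegrableOn q (Icc a b))
    (hk : ∫ t in Icc a b, |q t| < k) {A : ℝ}
    (hA : ∀ t ∈ Icc a b, ‖freeSolution k (w x₀) (w' x₀) (t - x₀)‖ ≤ A)
    (hx₀ : x₀ ∈ Icc a b) (hx : x ∈ Icc a b) :
    ‖w x - freeSolution k (w x₀) (w' x₀) (x - x₀)‖ ≤
      (∫ t in Icc a b, |q t|) / (k - ∫ t in Icc a b, |q t|) * A := by
  have hC₀ : 0 ≤ ∫ t in Icc a b, |q t| := integral_nonneg fun t => abs_nonneg _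
  have hk₀ : 0 < k := hC₀.trans_lt hk
  refine (norm_sub_le_of_forall_norm_le isCompact_Icc h.continuousOn (div_nonneg hC₀ hk₀.le)
    ((div_lt_one hk₀).2 hk) hA
    (fun M hM y hy => h.norm_sub_freeSolution_le_mul hk₀ hq hM hx₀ hy) hx).trans_eq ?_
  rw [one_sub_div hk₀.ne', div_div_div_cancel_right₀ hk₀.ne']

end IsSchrodingerSolution

theorem freeSolution_polar {k : ℝ} (hk : k ≠ 0) (A φ x : ℝ) :
    freeSolution k (A * cos φ) (k * A * sin φ) x = A * cos (k * x - φ) := by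
  rw [freeSolution, cos_sub, smul_eq_mul, smul_eq_mul]
  field_simp

theorem IsSchrodingerSolution.abs_sub_mul_cos_le {q w w' : ℝ → ℝ} {k R A φ x : ℝ}
    (h : IsSchrodingerSolution q k (Icc (-R) R) w w') (hq : IntegrableOn q (Icc (-R) R))
    (hk : ∫ t in Icc (-R) R, |q t| < k) (hw₀ : w 0 = A * cos φ) (hw'₀ : w' 0 = k * A * sin φ)
    (hx : |x| ≤ R) :
    |w x - A * cos (k * x - φ)| ≤
      (∫ t in Icc (-R) R, |q t|) / (k - ∫ t in Icc (-R) R, |q t|) * |A| := by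
  have hk₀ : k ≠ 0 := ((integral_nonneg fun t => abs_nonneg _).trans_lt hk).ne'
  have hfree (y : ℝ) : freeSolution k (w 0) (w' 0) (y - 0) = A * cos (k * y - φ) := by
    rw [hw₀, hw'₀, sub_zero, freeSolution_polar hk₀]
  have hA (y : ℝ) : ‖freeSolution k (w 0) (w' 0) (y - 0)‖ ≤ |A| := by
    rw [hfree, norm_mul, norm_eq_abs, norm_eq_abs]
    exact mul_le_of_le_one_right (abs_nonneg A) (abs_cos_le_one _)
  have h0 : (0 : ℝ) ∈ Icc (-R) R := abs_le.1 (by simpa using (abs_nonneg x).trans hx)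
  simpa only [hfree, norm_eq_abs] using
    h.norm_sub_freeSolution_le hq hk (fun y _ => hA y) h0 (abs_le.1 hx)

end Perturbation

section CauchyData

theorem sgn_eq_sign (t : ℝ) : sgn t = SignType.sign t := by
  simp only [sgn, sign_apply]
  split_ifs <;> simp

theorem sgn_div_of_pos {k : ℝ} (hk : 0 < k) (t : ℝ) : sgn (t / k) = sgn t := by
  simp only [sgn, div_pos_iff_of_pos_right hk, div_lt_iff₀ hk, zero_mul]

theorem sqrt_sq_add_sq_mul_sgn {a b : ℝ} (hab : a * b = 0) : √(a ^ 2 + b ^ 2) * sgn a = a := by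
  rw [sgn_eq_sign]
  rcases mul_eq_zero.1 hab with rfl | rfl
  · simp
  · simp [sqrt_sq_eq_abs]

theorem eq_zero_of_hasDerivAt_zero_of_even {E : Type*} [NormedAddCommGroup E] [NormedSpace ℝ E]
    {f : ℝ → E} {f' : E} (hf : HasDerivAt f f' 0) (heven : Function.Even f) : f' = 0 := by
  have hneg : HasDerivAt (fun x => f (-x)) (-f') 0 := by
    simpa using HasDerivAt.comp_const_sub (0 : ℝ) 0 (by simpa using hf)
  rw [funext heven] at hneg
  have : IsAddTorsionFree E := .of_isTorsionFree ℝ E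
  exact self_eq_neg.1 (hf.unique hneg)

theorem eq_cos_two_pi_mul_div_four {s : ℕ → ℝ} (heven : ∀ m, s (2 * m) = (-1) ^ m)
    (hodd : ∀ m, s (2 * m + 1) = 0) (n : ℕ) : s n = cos (2 * π * (n / 4)) := by
  obtain ⟨m, rfl | rfl⟩ := n.even_or_odd'
  · rw [heven, ← cos_nat_mul_pi]
    push_cast
    ring_nf
  · have harg : 2 * π * ((2 * m + 1 : ℕ) / 4) = π / 2 + m * π := by push_cast; ring
    rw [hodd, harg, cos_add_nat_mul_pi, cos_pi_div_two, mul_zero]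

theorem eq_sin_two_pi_mul_div_four {s : ℕ → ℝ} (heven : ∀ m, s (2 * m) = 0)
    (hodd : ∀ m, s (2 * m + 1) = (-1) ^ m) (n : ℕ) : s n = sin (2 * π * (n / 4)) := by
  obtain ⟨m, rfl | rfl⟩ := n.even_or_odd'
  · rw [heven, ← sin_nat_mul_pi m]
    push_cast
    ring_nf
  · have harg : 2 * π * ((2 * m + 1 : ℕ) / 4) = π / 2 + m * π := by push_cast; ring
    rw [hodd, harg, sin_add_nat_mul_pi, sin_pi_div_two, mul_one]

theorem cauchyData_eq_polar {u v : ℕ → ℝ} {k : ℝ} (hk : 0 < k) (hu : ∀ m, u (2 * m + 1) = 0)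
    (hv : ∀ m, v (2 * m) = 0) (hsu : ∀ m, sgn (u (2 * m)) = (-1) ^ m)
    (hsv : ∀ m, sgn (v (2 * m + 1)) = (-1) ^ m) (n : ℕ) :
    u n = √(u n ^ 2 + (v n / k) ^ 2) * cos (2 * π * (n / 4)) ∧
      v n = k * √(u n ^ 2 + (v n / k) ^ 2) * sin (2 * π * (n / 4)) := by
  have hsgn0 : sgn 0 = 0 := by simp [sgn]
  have hcos : sgn (u n) = cos (2 * π * (n / 4)) :=
    eq_cos_two_pi_mul_div_four (s := fun n => sgn (u n)) hsu (fun m => by rw [hu, hsgn0]) n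
  have hsin : sgn (v n / k) = sin (2 * π * (n / 4)) := by
    rw [sgn_div_of_pos hk]
    exact eq_sin_two_pi_mul_div_four (s := fun n => sgn (v n)) (fun m => by rw [hv, hsgn0]) hsv n
  have huv : u n * (v n / k) = 0 := by
    obtain ⟨m, rfl | rfl⟩ := n.even_or_odd'
    · rw [hv, zero_div, mul_zero]
    · rw [hu, zero_mul]
  rw [← hcos, ← hsin, mul_assoc, sqrt_sq_add_sq_mul_sgn huv, add_comm (u n ^ 2),
    sqrt_sq_add_sq_mul_sgn ((mul_comm _ _).trans huv), mul_div_cancel₀ _ hk.ne']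
  exact ⟨rfl, rfl⟩

end CauchyData

theorem wkb_asymptotic_general {V : ℝ → ℝ} (hV : LocallyIntegrable V volume) {ι : Type*}
    {l : Filter ι} {lam A θ : ι → ℝ} (hlam : Tendsto lam l atTop) {w w' : ι → ℝ → ℝ}
    (hw : ∀ i x, HasDerivAt (w i) (w' i x) x)
    (hODE : ∀ i x, HasDerivAt (w' i) (4 * π ^ 2 * (V x - lam i) * w i x) x)
    (hw₀ : ∀ i, w i 0 = A i * cos (2 * π * θ i))
    (hw'₀ : ∀ i, w' i 0 = 2 * π * √(lam i) * A i * sin (2 * π * θ i))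
    (R : ℝ) {ε : ℝ} (hε : 0 < ε) :
    ∀ᶠ i in l, ∀ x, |x| ≤ R →
      |w i x - A i * cos (2 * π * (√(lam i) * x - θ i))| ≤ ε * |A i| := by
  set C := ∫ t in Icc (-R) R, |4 * π ^ 2 * V t|
  have hq : IntegrableOn (fun t => 4 * π ^ 2 * V t) (Icc (-R) R) :=
    (hV.integrableOn_isCompact isCompact_Icc).const_mul _
  have hk : Tendsto (fun i => 2 * π * √(lam i)) l atTop :=
    (tendsto_sqrt_atTop.comp hlam).const_mul_atTop (by positivity)
  have hrate : Tendsto (fun i => C / (2 * π * √(lam i) - C)) l (nhds 0) :=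
    (tendsto_atTop_add_const_right _ (-C) hk).const_div_atTop C
  filter_upwards [hlam.eventually_ge_atTop 0, hk.eventually_gt_atTop C,
    hrate.eventually_le_const hε] with i hlam₀ hCk hCε x hx
  have hsol : IsSchrodingerSolution (fun t => 4 * π ^ 2 * V t) (2 * π * √(lam i)) (Icc (-R) R)
      (w i) (w' i) :=
    ⟨fun t _ => hw i t, fun t _ => (hODE i t).congr_deriv (by
      rw [mul_pow, sq_sqrt hlam₀, smul_eq_mul]; ring)⟩
  calc |w i x - A i * cos (2 * π * (√(lam i) * x - θ i))|
      = |w i x - A i * cos (2 * π * √(lam i) * x - 2 * π * θ i)| := by ring_nf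
    _ ≤ C / (2 * π * √(lam i) - C) * |A i| := hsol.abs_sub_mul_cos_le hq hCk (hw₀ i) (hw'₀ i) hx
    _ ≤ ε * |A i| := by gcongr

theorem wkb_asymptotic
    (V : ℝ → ℝ) (hVloc : LocallyIntegrable V volume)
    (hVeven : ∀ x, V (-x) = V x)
    (hVbelow : ∃ c : ℝ, ∀ᵐ x : ℝ, c ≤ V x)
    (hVinfty : Tendsto V (cocompact ℝ) atTop)
    (lam : ℕ → ℝ) (hlampos : ∀ n, 0 < lam n) (hlam : Tendsto lam atTop atTop)
    (w w' : ℕ → ℝ → ℝ)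
    (hw' : ∀ n x, HasDerivAt (w n) (w' n x) x)
    (hODE : ∀ n x, HasDerivAt (w' n) (4 * π ^ 2 * (V x - lam n) * w n x) x)
    (H1even : ∀ n, Even n → ∀ x, w n (-x) = w n x)
    (H1odd : ∀ n, Odd n → ∀ x, w n (-x) = - w n x)
    (H3even : ∀ n : ℕ, sgn (w (2 * n) 0) = (-1 : ℝ) ^ n)
    (H3odd : ∀ n : ℕ, sgn (w' (2 * n + 1) 0) = (-1 : ℝ) ^ n) :
    ∀ R > (0 : ℝ), ∀ ε > (0 : ℝ), ∃ N : ℕ, ∀ n ≥ N, ∀ x : ℝ, |x| ≤ R →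
      |w n x - Real.sqrt ((w n 0) ^ 2 + (w' n 0) ^ 2 / (4 * π ^ 2 * lam n)) *
          Real.cos (2 * π * (Real.sqrt (lam n) * x - (n : ℝ) / 4))| ≤
        ε * Real.sqrt ((w n 0) ^ 2 + (w' n 0) ^ 2 / (4 * π ^ 2 * lam n)) := by
  intro R _ ε hε
  have hpolar (n : ℕ) := cauchyData_eq_polar (u := fun n => w n 0) (v := fun n => w' n 0)
    (show 0 < 2 * π * √(lam n) by have := hlampos n; positivity)
    (fun m => Function.Odd.map_zero (H1odd _ (odd_two_mul_add_one m)))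
    (fun m => eq_zero_of_hasDerivAt_zero_of_even (hw' _ 0) (H1even _ (even_two_mul m)))
    H3even H3odd n
  have hfreq (n : ℕ) : (2 * π * √(lam n)) ^ 2 = 4 * π ^ 2 * lam n := by
    rw [mul_pow, sq_sqrt (hlampos n).le]
    ring
  simp only [div_pow, hfreq] at hpolar
  have hasymp := wkb_asymptotic_general hVloc hlam hw' hODE (fun n => (hpolar n).1)
    (fun n => (hpolar n).2) R hε
  simpa only [abs_of_nonneg (sqrt_nonneg _), eventually_atTop] using hasymp
end
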